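/- For every odd integer n ≥ 5, every matrix (a b; c d) in SL₂(ℤ) with 2ⁿ ∣ c, and every τ in the complex upper half-plane ℍ, y_n((aτ+b)/(cτ+d)) = (2/d)·y_n(τ), where (2/d) is the Jacobi symbol, equal to (−1)^{(d²−1)/8} for the odd integer d. -/

import Mathlib

open Complex Filter Topology

/-- Jacobi theta function θ₂(τ) = ∑_{n∈ℤ} exp(πiτ(n+1/2)²). -/
noncomputable def θ₂ (τ : ℂ) : ℂ :=
  ∑' n : ℤ, Complex.exp (Real.pi * Complex.I * τ * ((n : ℂ) + 1/2)^2)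

/-- Jacobi theta function θ₃(τ) = ∑_{n∈ℤ} exp(πiτn²). -/
noncomputable def θ₃ (τ : ℂ) : ℂ :=
  ∑' n : ℤ, Complex.exp (Real.pi * Complex.I * τ * (n : ℂ)^2)

/-- x_n(τ) = 2θ₃(2^{n-1}τ)/θ₂(2^{n-1}τ). -/
noncomputable def xfun (n : ℕ) (τ : ℂ) : ℂ :=
  2 * θ₃ (2^(n-1) * τ) / θ₂ (2^(n-1) * τ)

/-- y_n(τ) = θ₂(8τ)/θ₂(2^{n-1}τ). -/
noncomputable def yfun (n : ℕ) (τ : ℂ) : ℂ :=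
  θ₂ (8 * τ) / θ₂ (2^(n-1) * τ)

/-!
Since `θ₂` never vanishes on the upper half-plane, `yfun n` is the telescoping product of
`f (2 ^ k * τ)` for `3 ≤ k < n - 1`, where `f τ = θ₂ τ / θ₂ (2 * τ)`. The group `Γ₀(4)` is generated
by `τ ↦ τ + 1`, `τ ↦ τ / (4 * τ + 1)` and `-1`: the first multiplies `f` by `exp (-πi / 4)`, and the
second fixes it, because inversion turns it into translations of `-1 / τ` and `-1 / (2 * τ)` by
multiples of the period `2` of the Jacobi theta function. Hence
`f (γ τ) = exp (πi ((d² - 1) / 8 - b d / 4)) f τ` for `γ = (a b; c d)` in `Γ₀(4)`. Conjugating by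
`τ ↦ 2 ^ k * τ` replaces `b` by `2 ^ k * b`, so for `k ≥ 3` each factor contributes exactly the sign
`(-1) ^ ((d² - 1) / 8)`.
-/

open CongruenceSubgroup ModularGroup
open scoped MatrixGroups Real UpperHalfPlane

lemma ofReal_mul_cpow {r : ℝ} (hr : 0 ≤ r) (z s : ℂ) :
    ((r : ℂ) * z) ^ s = (r : ℂ) ^ s * z ^ s := by
  rcases eq_or_ne s 0 with rfl | hs
  · simp
  rcases hr.eq_or_lt with rfl | hr
  · simp [hs]
  rcases eq_or_ne z 0 with rfl | hz
  · simp [hs]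
  have hr' : (r : ℂ) ≠ 0 := ofReal_ne_zero.2 hr.ne'
  rw [cpow_def_of_ne_zero (mul_ne_zero hr' hz), cpow_def_of_ne_zero hr', cpow_def_of_ne_zero hz,
    log_ofReal_mul hr hz, ofReal_log hr.le, add_mul, Complex.exp_add]

section JacobiTheta

lemma jacobiTheta₂_half_eq_jacobiTheta_add_one (τ : ℂ) :
    jacobiTheta₂ (1 / 2) τ = jacobiTheta (τ + 1) := by
  refine tsum_congr fun n => ?_
  obtain ⟨k, hk⟩ := Int.even_mul_pred_self n
  have hk' : (n : ℂ) * (n - 1) = k + k := by exact_mod_cast hk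
  rw [jacobiTheta₂_term, Complex.exp_eq_exp_iff_exists_int]
  refine ⟨-k, ?_⟩
  push_cast
  linear_combination -(π * I) * hk'

lemma periodic_jacobiTheta : Function.Periodic jacobiTheta 2 := fun τ => by
  rw [add_comm, jacobiTheta_two_add]

lemma tendsto_jacobiTheta_comap_im_atTop : Tendsto jacobiTheta (comap im atTop) (𝓝 1) := by
  have hdecay : Tendsto (fun τ : ℂ => Real.exp (-π * τ.im)) (comap im atTop) (𝓝 0) :=
    Real.tendsto_exp_atBot.comp
      (tendsto_comap.const_mul_atTop_of_neg (neg_lt_zero.2 Real.pi_pos))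
  simpa using (isBigO_at_im_infty_jacobiTheta_sub_one.trans_tendsto hdecay).add_const 1

end JacobiTheta

section ThetaTwo

lemma θ₂_term_eq (n : ℤ) (τ : ℂ) :
    cexp (π * I * τ * ((n : ℂ) + 1 / 2) ^ 2) =
      cexp (π * I * τ / 4) * jacobiTheta₂_term n (τ / 2) τ := by
  rw [jacobiTheta₂_term, ← Complex.exp_add]
  ring_nf

lemma θ₂_eq_jacobiTheta₂ (τ : ℂ) : θ₂ τ = cexp (π * I * τ / 4) * jacobiTheta₂ (τ / 2) τ := by
  simp only [θ₂, θ₂_term_eq, tsum_mul_left, jacobiTheta₂]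

lemma summable_θ₂_term {τ : ℂ} (hτ : 0 < τ.im) :
    Summable fun n : ℤ => cexp (π * I * τ * ((n : ℂ) + 1 / 2) ^ 2) := by
  simp only [θ₂_term_eq]
  exact ((summable_jacobiTheta₂_term_iff _ _).2 hτ).mul_left _

lemma summable_θ₃_term {τ : ℂ} (hτ : 0 < τ.im) :
    Summable fun n : ℤ => cexp (π * I * τ * (n : ℂ) ^ 2) := by
  refine ((summable_jacobiTheta₂_term_iff 0 τ).2 hτ).congr fun n => ?_
  rw [jacobiTheta₂_term]
  ring_nf

lemma θ₂_add_one (τ : ℂ) : θ₂ (τ + 1) = cexp (π * I / 4) * θ₂ τ := by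
  rw [θ₂, θ₂, ← tsum_mul_left]
  refine tsum_congr fun n => ?_
  obtain ⟨k, hk⟩ := Int.even_mul_succ_self n
  have hk' : (n : ℂ) * (n + 1) = k + k := by exact_mod_cast hk
  rw [← Complex.exp_add, Complex.exp_eq_exp_iff_exists_int]
  exact ⟨k, by linear_combination (π * I) * hk'⟩

lemma θ₂_eq_jacobiTheta_neg_inv {τ : ℂ} (hτ : τ ≠ 0) :
    θ₂ τ = 1 / (-I * τ) ^ (1 / 2 : ℂ) * jacobiTheta (-1 / τ + 1) := by
  have hexp : cexp (π * I * τ / 4) * cexp (-π * I * (τ / 2) ^ 2 / τ) = 1 := by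
    rw [← Complex.exp_add, ← Complex.exp_zero]
    congr 1
    field_simp
    ring
  rw [θ₂_eq_jacobiTheta₂, jacobiTheta₂_functional_equation, div_div_cancel_left' hτ,
    ← one_div, jacobiTheta₂_half_eq_jacobiTheta_add_one]
  linear_combination (1 / (-I * τ) ^ (1 / 2 : ℂ) * jacobiTheta (-1 / τ + 1)) * hexp

/-- The decomposition of `ℤ × ℤ` into the pairs with even and with odd difference. Both pieces are
parametrised so that `(m + 1/2)² + (n + 1/2)²` becomes `2 (p + 1/2)² + 2 q²`. -/
def intPairSplit : (ℤ × ℤ) ⊕ (ℤ × ℤ) → ℤ × ℤ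
  | Sum.inl (p, q) => (p + q, p - q)
  | Sum.inr (p, q) => (p + q, q - p - 1)

lemma intPairSplit_bijective : Function.Bijective intPairSplit := by
  constructor
  · rintro (⟨p, q⟩ | ⟨p, q⟩) (⟨p', q'⟩ | ⟨p', q'⟩) h <;>
      simp only [intPairSplit, Prod.mk.injEq, Sum.inl.injEq, Sum.inr.injEq, reduceCtorEq] at h ⊢ <;>
      omega
  · rintro ⟨m, n⟩
    obtain ⟨k, hk | hk⟩ := Int.even_or_odd' (m - n)
    · exact ⟨Sum.inl (m - k, k), by simp only [intPairSplit, Prod.mk.injEq]; omega⟩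
    · exact ⟨Sum.inr (k, m - k), by simp only [intPairSplit, Prod.mk.injEq]; omega⟩

lemma θ₂_sq {τ : ℂ} (hτ : 0 < τ.im) : θ₂ τ ^ 2 = 2 * (θ₂ (2 * τ) * θ₃ (2 * τ)) := by
  have h2τ : 0 < (2 * τ).im := by simpa using hτ
  have hθ₂ := (summable_θ₂_term hτ).norm
  have hθ₂' := (summable_θ₂_term h2τ).norm
  have hθ₃' := (summable_θ₃_term h2τ).norm
  have hsum := (summable_mul_of_summable_norm hθ₂' hθ₃').hasSum
  rw [← tsum_mul_tsum_of_summable_norm hθ₂' hθ₃', ← θ₂, ← θ₃] at hsum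
  rw [sq, θ₂, tsum_mul_tsum_of_summable_norm hθ₂ hθ₂, two_mul]
  refine HasSum.tsum_eq ((Equiv.ofBijective _ intPairSplit_bijective).hasSum_iff.1 ?_)
  refine HasSum.sum ?_ ?_ <;>
  · convert hsum using 2 with ⟨p, q⟩
    simp only [Function.comp_apply, Equiv.ofBijective_apply, intPairSplit, ← Complex.exp_add]
    push_cast
    ring_nf

lemma θ₂_div_two_pow_eq_zero {τ : ℂ} (hτ : 0 < τ.im) (h : θ₂ τ = 0) (k : ℕ) :
    θ₂ (τ / 2 ^ k) = 0 := by
  induction k with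
  | zero => simpa using h
  | succ k ih =>
    have him : 0 < (τ / 2 ^ (k + 1)).im := by
      rw [show τ / 2 ^ (k + 1) = τ / ((2 ^ (k + 1) : ℝ) : ℂ) by push_cast; rfl, div_ofReal_im]
      positivity
    have hdouble : 2 * (τ / 2 ^ (k + 1)) = τ / 2 ^ k := by field_simp; ring
    rw [← sq_eq_zero_iff, θ₂_sq him, hdouble, ih, zero_mul, mul_zero]

-- By `θ₂_sq` a zero at `τ` propagates to `τ / 2 ^ k`; under `τ ↦ -1 / τ` these points tend to `i∞`,
-- where the transformed theta function tends to `1`.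
lemma θ₂_ne_zero {τ : ℂ} (hτ : 0 < τ.im) : θ₂ τ ≠ 0 := by
  intro h
  have hτ0 : τ ≠ 0 := by rintro rfl; simp at hτ
  have hzero (k : ℕ) : jacobiTheta (2 ^ k * (-1 / τ) + 1) = 0 := by
    have hk := θ₂_div_two_pow_eq_zero hτ h k
    rw [θ₂_eq_jacobiTheta_neg_inv (by simp [hτ0]), div_div_eq_mul_div, mul_comm (-1),
      mul_div_assoc] at hk
    exact (mul_eq_zero.1 hk).resolve_left (by simp [cpow_eq_zero_iff, hτ0])
  have him (k : ℕ) : (2 ^ k * (-1 / τ) + 1).im = 2 ^ k * (τ.im / normSq τ) := by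
    rw [show (2 : ℂ) ^ k * (-1 / τ) = ((2 ^ k : ℝ) : ℂ) * (-1 / τ) by push_cast; rfl, add_im,
      im_ofReal_mul, neg_div, neg_im, one_div, inv_im, one_im]
    ring
  have htop : Tendsto (fun k : ℕ => 2 ^ k * (-1 / τ) + 1) atTop (comap im atTop) := by
    rw [tendsto_comap_iff, Function.comp_def]
    simp only [him]
    exact (tendsto_pow_atTop_atTop_of_one_lt one_lt_two).atTop_mul_const
      (div_pos hτ (normSq_pos.2 hτ0))
  have hlim := tendsto_jacobiTheta_comap_im_atTop.comp htop
  simp only [Function.comp_def, hzero] at hlim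
  exact zero_ne_one (tendsto_nhds_unique tendsto_const_nhds hlim)

end ThetaTwo

section ThetaQuotient

/-- The theta quotient `θ₂(τ) / θ₂(2τ)`, whose values at `2 ^ k * τ` are the successive factors of
`yfun n τ`. -/
noncomputable def thetaQuotient (τ : ℂ) : ℂ := θ₂ τ / θ₂ (2 * τ)

lemma thetaQuotient_add_one (τ : ℂ) :
    thetaQuotient (τ + 1) = cexp (-(π * I / 4)) * thetaQuotient τ := by
  rw [thetaQuotient, thetaQuotient, show 2 * (τ + 1) = (2 * τ + 1) + 1 by ring, θ₂_add_one,
    θ₂_add_one, θ₂_add_one, Complex.exp_neg]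
  field_simp [Complex.exp_ne_zero]

lemma thetaQuotient_eq_jacobiTheta_neg_inv {τ : ℂ} (hτ : τ ≠ 0) :
    thetaQuotient τ = (2 : ℂ) ^ (1 / 2 : ℂ) *
      (jacobiTheta (-1 / τ + 1) / jacobiTheta (-1 / (2 * τ) + 1)) := by
  have hsqrt : (-I * (2 * τ)) ^ (1 / 2 : ℂ) = (2 : ℂ) ^ (1 / 2 : ℂ) * (-I * τ) ^ (1 / 2 : ℂ) := by
    rw [mul_left_comm]
    exact_mod_cast ofReal_mul_cpow zero_le_two (-I * τ) (1 / 2)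
  have hne : (-I * τ) ^ (1 / 2 : ℂ) ≠ 0 := by simp [cpow_eq_zero_iff, hτ]
  rw [thetaQuotient, θ₂_eq_jacobiTheta_neg_inv hτ, θ₂_eq_jacobiTheta_neg_inv (by simp [hτ]), hsqrt]
  field_simp [hne]

lemma thetaQuotient_div_four_mul_add_one {τ : ℂ} (hτ : τ ≠ 0) (h : 4 * τ + 1 ≠ 0) :
    thetaQuotient (τ / (4 * τ + 1)) = thetaQuotient τ := by
  have hinv : -1 / (τ / (4 * τ + 1)) + 1 = -1 / τ + 1 - 2 - 2 := by field_simp; ring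
  have hinv₂ : -1 / (2 * (τ / (4 * τ + 1))) + 1 = -1 / (2 * τ) + 1 - 2 := by field_simp; ring
  rw [thetaQuotient_eq_jacobiTheta_neg_inv (div_ne_zero hτ h),
    thetaQuotient_eq_jacobiTheta_neg_inv hτ, hinv, hinv₂]
  simp only [periodic_jacobiTheta.sub_eq]

end ThetaQuotient

section GammaZeroFour

lemma coe_SL2Z_smul (γ : SL(2, ℤ)) (τ : ℍ) :
    ((γ • τ : ℍ) : ℂ) = (γ 0 0 * τ + γ 0 1) / (γ 1 0 * τ + γ 1 1) := by
  rw [UpperHalfPlane.coe_specialLinearGroup_apply]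
  simp

/-- The lower unipotent matrix which together with `T` and `-1` generates `Γ₀(4)`. -/
def U₄ : SL(2, ℤ) := ⟨!![1, 0; 4, 1], by simp [Matrix.det_fin_two]⟩

lemma coe_U₄ : (U₄ : Matrix (Fin 2) (Fin 2) ℤ) = !![1, 0; 4, 1] := rfl

lemma coe_U₄_inv : ((U₄⁻¹ : SL(2, ℤ)) : Matrix (Fin 2) (Fin 2) ℤ) = !![1, 0; -4, 1] := by
  simp [Matrix.SpecialLinearGroup.coe_inv, coe_U₄, Matrix.adjugate_fin_two]

lemma coe_U₄_smul (τ : ℍ) : ((U₄ • τ : ℍ) : ℂ) = τ / (4 * τ + 1) := by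
  rw [coe_SL2Z_smul]
  simp [coe_U₄]

lemma mem_Gamma0_iff_dvd {N : ℕ} {γ : SL(2, ℤ)} : γ ∈ Gamma0 N ↔ (N : ℤ) ∣ γ 1 0 := by
  rw [Gamma0_mem, ZMod.intCast_zmod_eq_zero_iff_dvd]

lemma odd_diag_of_mem_Gamma0 {N : ℕ} (hN : Even N) {γ : SL(2, ℤ)} (hγ : γ ∈ Gamma0 N) :
    Odd (γ 0 0) ∧ Odd (γ 1 1) := by
  obtain ⟨s, hs⟩ := (even_iff_two_dvd.1 ((Int.even_coe_nat N).2 hN)).trans (mem_Gamma0_iff_dvd.1 hγ)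
  have hdet := γ.det_coe
  rw [Matrix.det_fin_two, hs] at hdet
  exact Int.odd_mul.1 ⟨γ 0 1 * s, by linarith⟩

lemma mem_closure_of_lower_left_eq_zero {γ : SL(2, ℤ)} (hγ : γ 1 0 = 0) :
    γ ∈ Subgroup.closure {T, U₄, -1} := by
  have hT (k : ℤ) : T ^ k ∈ Subgroup.closure {T, U₄, -1} :=
    zpow_mem (Subgroup.subset_closure (by simp)) k
  have hdet : γ 0 0 * γ 1 1 = 1 := by
    have h := γ.det_coe
    rwa [Matrix.det_fin_two, hγ, mul_zero, sub_zero] at h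
  rcases Int.eq_one_or_neg_one_of_mul_eq_one' hdet with ⟨ha, hd⟩ | ⟨ha, hd⟩
  · have hγT : γ = T ^ γ 0 1 := by
      ext i j; fin_cases i <;> fin_cases j <;> simp [ha, hγ, hd, coe_T_zpow]
    rw [hγT]
    exact hT _
  · have hγT : γ = -1 * T ^ (-γ 0 1) := by
      ext i j; fin_cases i <;> fin_cases j <;> simp [ha, hγ, hd, coe_T_zpow]
    rw [hγT]
    exact mul_mem (Subgroup.subset_closure (by simp)) (hT _)

lemma exists_mul_first_column_lt {γ : SL(2, ℤ)} (hγ : γ ∈ Gamma0 4) (hc : γ 1 0 ≠ 0) :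
    ∃ δ ∈ ({T, T⁻¹, U₄, U₄⁻¹} : Set SL(2, ℤ)),
      ((δ * γ) 0 0).natAbs + ((δ * γ) 1 0).natAbs < (γ 0 0).natAbs + (γ 1 0).natAbs := by
  obtain ⟨s, hs⟩ := mem_Gamma0_iff_dvd.1 hγ
  obtain ⟨t, ht⟩ := (odd_diag_of_mem_Gamma0 (by decide) hγ).1
  simp only [Set.mem_insert_iff, Set.mem_singleton_iff, exists_eq_or_imp, exists_eq_left,
    Matrix.SpecialLinearGroup.coe_mul, Matrix.mul_apply, Fin.sum_univ_two, coe_T, coe_T_inv,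
    coe_U₄, coe_U₄_inv, Matrix.of_apply, Matrix.cons_val', Matrix.cons_val_zero,
    Matrix.cons_val_one, Matrix.cons_val_fin_one]
  omega

lemma closure_T_U₄_neg_one_le_Gamma0_four : Subgroup.closure {T, U₄, -1} ≤ Gamma0 4 := by
  rw [Subgroup.closure_le]
  rintro x (rfl | rfl | rfl) <;> rw [SetLike.mem_coe, mem_Gamma0_iff_dvd] <;> simp [coe_T, coe_U₄]

-- Euclidean descent on the first column.
theorem closure_T_U₄_neg_one_eq_Gamma0_four : Subgroup.closure {T, U₄, -1} = Gamma0 4 := by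
  refine closure_T_U₄_neg_one_le_Gamma0_four.antisymm fun γ hγ => ?_
  induction hsize : (γ 0 0).natAbs + (γ 1 0).natAbs using Nat.strong_induction_on
    generalizing γ with
  | _ _ ih =>
    by_cases hc : γ 1 0 = 0
    · exact mem_closure_of_lower_left_eq_zero hc
    obtain ⟨δ, hδ, hlt⟩ := exists_mul_first_column_lt hγ hc
    have hδ' : δ ∈ Subgroup.closure {T, U₄, -1} := by
      have hT : T ∈ Subgroup.closure {T, U₄, -1} := Subgroup.subset_closure (by simp)
      have hU₄ : U₄ ∈ Subgroup.closure {T, U₄, -1} := Subgroup.subset_closure (by simp)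
      obtain rfl | rfl | rfl | rfl := hδ
      exacts [hT, inv_mem hT, hU₄, inv_mem hU₄]
    have hδγ : δ * γ ∈ Gamma0 4 := mul_mem (closure_T_U₄_neg_one_le_Gamma0_four hδ') hγ
    exact (Subgroup.mul_mem_cancel_left _ hδ').1 (ih _ (hsize ▸ hlt) _ hδγ rfl)

end GammaZeroFour

section Multiplier

/-- The multiplier of `thetaQuotient` under the action of `Γ₀(4)`. The formula is written
for all of `SL(2, ℤ)`, but it is meant for `Γ₀(4)`, where `γ 1 1` is odd. -/
noncomputable def thetaMultiplier (γ : SL(2, ℤ)) : ℂ :=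
  cexp (π * I * (((γ 1 1 : ℂ) ^ 2 - 1) / 8 - γ 0 1 * γ 1 1 / 4))

lemma thetaMultiplier_T : thetaMultiplier T = cexp (-(π * I / 4)) := by
  rw [thetaMultiplier]
  congr 1
  simp only [coe_T, Matrix.of_apply, Matrix.cons_val', Matrix.cons_val_zero, Matrix.cons_val_one,
    Matrix.cons_val_fin_one]
  push_cast
  ring

lemma thetaMultiplier_U₄ : thetaMultiplier U₄ = 1 := by
  simp [thetaMultiplier, coe_U₄]

lemma thetaMultiplier_ne_zero (γ : SL(2, ℤ)) : thetaMultiplier γ ≠ 0 :=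
  Complex.exp_ne_zero _

lemma thetaMultiplier_of_eight_dvd {γ : SL(2, ℤ)} (hγ : γ ∈ Gamma0 4) (h : 8 ∣ γ 0 1) :
    thetaMultiplier γ = (-1) ^ ((γ 1 1 ^ 2 - 1) / 8) := by
  obtain ⟨k, hk⟩ := Int.eight_dvd_sq_sub_one_of_odd (odd_diag_of_mem_Gamma0 (by decide) hγ).2
  obtain ⟨l, hl⟩ := h
  have hk' : (γ 1 1 : ℂ) ^ 2 - 1 = 8 * k := by exact_mod_cast hk
  rw [hk, Int.mul_ediv_cancel_left _ (by norm_num), ← Complex.exp_pi_mul_I, ← Complex.exp_int_mul,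
    thetaMultiplier, hk', hl, Complex.exp_eq_exp_iff_exists_int]
  refine ⟨-(l * γ 1 1), ?_⟩
  push_cast
  ring

lemma thetaMultiplier_T_mul {γ : SL(2, ℤ)} (hγ : γ ∈ Gamma0 4) :
    thetaMultiplier (T * γ) = thetaMultiplier T * thetaMultiplier γ := by
  obtain ⟨k, hk⟩ := Int.eight_dvd_sq_sub_one_of_odd (odd_diag_of_mem_Gamma0 (by decide) hγ).2
  have hk' : (γ 1 1 : ℂ) ^ 2 - 1 = 8 * k := by exact_mod_cast hk
  have hb : (T * γ) 0 1 = γ 0 1 + γ 1 1 := by simp [coe_T, Matrix.mul_apply, Fin.sum_univ_two]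
  rw [thetaMultiplier_T, thetaMultiplier, thetaMultiplier, T_mul_apply_one, hb, ← Complex.exp_add,
    Complex.exp_eq_exp_iff_exists_int]
  refine ⟨-k, ?_⟩
  push_cast
  linear_combination -(π * I / 4) * hk'

lemma thetaMultiplier_U₄_mul {γ : SL(2, ℤ)} (hγ : γ ∈ Gamma0 4) :
    thetaMultiplier (U₄ * γ) = thetaMultiplier γ := by
  have hodd := (odd_diag_of_mem_Gamma0 (by decide) hγ).2
  obtain ⟨k, hk⟩ : Even (γ 0 1 * (γ 0 1 + γ 1 1)) := by
    rcases Int.even_or_odd (γ 0 1) with hb | hb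
    · exact hb.mul_right _
    · exact (hb.add_odd hodd).mul_left _
  have hk' : (γ 0 1 : ℂ) * (γ 0 1 + γ 1 1) = k + k := by exact_mod_cast hk
  have hb : (U₄ * γ) 0 1 = γ 0 1 := by simp [coe_U₄, Matrix.mul_apply, Fin.sum_univ_two]
  have hd : (U₄ * γ) 1 1 = 4 * γ 0 1 + γ 1 1 := by
    simp [coe_U₄, Matrix.mul_apply, Fin.sum_univ_two]
  rw [thetaMultiplier, thetaMultiplier, hb, hd, Complex.exp_eq_exp_iff_exists_int]
  refine ⟨k, ?_⟩
  push_cast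
  linear_combination (π * I) * hk'

lemma thetaMultiplier_generator_mul {x γ : SL(2, ℤ)} (hx : x ∈ ({T, U₄, -1} : Set SL(2, ℤ)))
    (hγ : γ ∈ Gamma0 4) : thetaMultiplier (x * γ) = thetaMultiplier x * thetaMultiplier γ := by
  obtain rfl | rfl | rfl := hx
  · exact thetaMultiplier_T_mul hγ
  · rw [thetaMultiplier_U₄_mul hγ, thetaMultiplier_U₄, one_mul]
  · simp [thetaMultiplier]

lemma thetaQuotient_generator_smul {x : SL(2, ℤ)} (hx : x ∈ ({T, U₄, -1} : Set SL(2, ℤ)))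
    (τ : ℍ) : thetaQuotient ↑(x • τ) = thetaMultiplier x * thetaQuotient τ := by
  obtain rfl | rfl | rfl := hx
  · rw [UpperHalfPlane.modular_T_smul, thetaMultiplier_T, ← thetaQuotient_add_one]
    simp [add_comm]
  · have hdenom : 4 * (τ : ℂ) + 1 ≠ 0 := by
      intro h
      simpa [τ.im_ne_zero] using congrArg im h
    rw [coe_U₄_smul, thetaMultiplier_U₄, one_mul,
      thetaQuotient_div_four_mul_add_one τ.ne_zero hdenom]
  · simp [thetaMultiplier]

theorem thetaQuotient_smul {γ : SL(2, ℤ)} (hγ : γ ∈ Gamma0 4) (τ : ℍ) :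
    thetaQuotient ↑(γ • τ) = thetaMultiplier γ * thetaQuotient τ := by
  rw [← closure_T_U₄_neg_one_eq_Gamma0_four] at hγ
  induction hγ using Subgroup.closure_induction_left with
  | one => simp [thetaMultiplier]
  | mul_left x hx γ hγ ih =>
    rw [closure_T_U₄_neg_one_eq_Gamma0_four] at hγ
    rw [mul_smul, thetaQuotient_generator_smul hx, ih, thetaMultiplier_generator_mul hx hγ,
      mul_assoc]
  | inv_mul_cancel x hx γ hγ ih =>
    have hmem : x⁻¹ * γ ∈ Gamma0 4 := by
      rw [← closure_T_U₄_neg_one_eq_Gamma0_four]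
      exact mul_mem (inv_mem (Subgroup.subset_closure hx)) hγ
    refine mul_left_cancel₀ (thetaMultiplier_ne_zero x) ?_
    rw [← thetaQuotient_generator_smul hx, ← mul_smul, mul_inv_cancel_left, ih, ← mul_assoc,
      ← thetaMultiplier_generator_mul hx hmem, mul_inv_cancel_left]

end Multiplier

section Level

variable {a b c d : ℤ} {τ : ℂ}

lemma moebius_im_pos (hdet : a * d - b * c = 1) (hτ : 0 < τ.im) :
    0 < (((a : ℂ) * τ + b) / (c * τ + d)).im := by
  let γ : SL(2, ℤ) := ⟨!![a, b; c, d], by rw [Matrix.det_fin_two_of, hdet]⟩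
  have hγ : ((γ • (⟨τ, hτ⟩ : ℍ) : ℍ) : ℂ) = (a * τ + b) / (c * τ + d) := coe_SL2Z_smul _ _
  rw [← hγ]
  exact (γ • (⟨τ, hτ⟩ : ℍ)).im_pos

lemma thetaQuotient_mul_moebius {N : ℕ} (hN : 0 < N) (h8 : 8 ∣ N) (hdet : a * d - b * c = 1)
    (hc : 4 * (N : ℤ) ∣ c) (hτ : 0 < τ.im) :
    thetaQuotient (N * ((a * τ + b) / (c * τ + d))) =
      (-1) ^ ((d ^ 2 - 1) / 8) * thetaQuotient (N * τ) := by
  obtain ⟨e, rfl⟩ := hc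
  let γ : SL(2, ℤ) := ⟨!![a, N * b; 4 * e, d], by rw [Matrix.det_fin_two_of, ← hdet]; ring⟩
  let τN : ℍ := ⟨N * τ, by simpa [hN] using hτ⟩
  have hγ : γ ∈ Gamma0 4 := mem_Gamma0_iff_dvd.2 (dvd_mul_right 4 e)
  have hγb : 8 ∣ γ 0 1 := dvd_mul_of_dvd_left (by exact_mod_cast h8) b
  have hsmul : ((γ • τN : ℍ) : ℂ) = N * ((a * τ + b) / ((4 * N * e : ℤ) * τ + d)) := by
    have hcoe : ((γ • τN : ℍ) : ℂ) =
        (a * (N * τ) + (N * b : ℤ)) / ((4 * e : ℤ) * (N * τ) + d) := coe_SL2Z_smul γ τN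
    rw [hcoe]
    push_cast
    ring
  rw [← hsmul, thetaQuotient_smul hγ, thetaMultiplier_of_eight_dvd hγ hγb]
  rfl

lemma yfun_four (hτ : 0 < τ.im) : yfun 4 τ = 1 := by
  have h8 : 0 < (8 * τ).im := by simpa using hτ
  rw [yfun, show (2 : ℂ) ^ (4 - 1) = 8 by norm_num, div_self (θ₂_ne_zero h8)]

lemma yfun_add_two (n : ℕ) (hτ : 0 < τ.im) :
    yfun (n + 2) τ = yfun (n + 1) τ * thetaQuotient (2 ^ n * τ) := by
  have him : 0 < ((2 ^ n : ℝ) * τ).im := by rw [im_ofReal_mul]; positivity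
  push_cast at him
  rw [yfun, yfun, thetaQuotient, Nat.add_sub_cancel, div_mul_div_cancel₀ (θ₂_ne_zero him),
    ← mul_assoc 2, ← pow_succ', show n + 2 - 1 = n + 1 from rfl]

theorem y_odd_transform_general {n : ℕ} (hn : 4 ≤ n) (hdet : a * d - b * c = 1)
    (hc : (2 ^ n : ℤ) ∣ c) (hτ : 0 < τ.im) :
    yfun n ((a * τ + b) / (c * τ + d)) = ((-1 : ℂ) ^ ((d ^ 2 - 1) / 8)) ^ n * yfun n τ := by
  have hτ' := moebius_im_pos hdet hτ
  induction n, hn using Nat.le_induction with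
  | base =>
    have hsign : ((-1 : ℂ) ^ ((d ^ 2 - 1) / 8)) ^ 4 = 1 := by
      rw [← zpow_natCast, zpow_comm]
      norm_num
    rw [yfun_four hτ', yfun_four hτ, hsign, one_mul]
  | succ n hn ih =>
    obtain ⟨m, rfl⟩ := Nat.exists_eq_add_of_le' hn
    have hstep := thetaQuotient_mul_moebius (N := 2 ^ (m + 3)) (by positivity)
      (Dvd.intro_left (2 ^ m) (by ring)) hdet (by convert hc using 1; push_cast; ring) hτ
    push_cast at hstep
    rw [yfun_add_two _ hτ', yfun_add_two _ hτ, hstep, ih (dvd_trans (pow_dvd_pow 2 (by lia)) hc)]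
    ring

end Level

theorem y_odd_transform (n : ℕ) (hn : 5 ≤ n) (hn2 : Odd n)
    (a b c d : ℤ) (hdet : a * d - b * c = 1) (hc : (2 ^ n : ℤ) ∣ c)
    (τ : ℂ) (hτ : 0 < τ.im) :
    yfun n (((a : ℂ) * τ + b) / ((c : ℂ) * τ + d)) =
      (-1 : ℂ) ^ ((d ^ 2 - 1) / 8 : ℤ) * yfun n τ := by
  rw [y_odd_transform_general (by lia) hdet hc hτ, ← zpow_natCast, zpow_comm, zpow_natCast,
    hn2.neg_one_pow]
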